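/- Let k ≥ 3 be an integer, n ≥ 1, and x_1,…,x_n ∈ (0,∞) data points. Let ĝ : (0,∞) → (0,∞) be continuous and let τ_0 < τ_1 < ⋯ < τ_{2k−3} be points in (0,∞) such that: (H1) for every x > 0, x^k/k ≥ (1/n)∑_{i : x_i ≤ x} (x − x_i)^{k−1}/ĝ(x_i); (H2) for each j = 0,…,2k−3, equality holds in (H1) at x = τ_j, and moreover τ_j^{k−1}/(k−1) = (1/n)∑_{i : x_i ≤ τ_j} (τ_j − x_i)^{k−2}/ĝ(x_i); (H3) the restriction of ĝ to [τ_0, τ_{2k−3}] is (k−2)-times continuously differentiable and agrees on each interval [τ_j, τ_{j+1}], j = 0,…,2k−4, with a polynomial of degree at most k−1. Let g_0 : (0,∞) → (0,∞) be continuous, set γ := g_0(τ_0), and define on [τ_0, τ_{2k−3}] the functions Y_n(x) := (1/n)∑_{i : x_i ≤ x} (x − x_i)^{k−1}/(k−1)!, f̌(x) := −∫_{τ_0}^x ((x−t)^{k−1}/(k−1)!)·(1/ĝ(t) − 1/γ)·(ĝ(t) − g_0(t)) dt, and Δ(x) := (1/n)∑_{i : τ_0 < x_i ≤ x} ((x −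 x_i)^{k−1}/(k−1)!)·(1/ĝ(x_i) − 1/γ) − ∫_{τ_0}^x ((x−t)^{k−1}/(k−1)!)·(1/ĝ(t) − 1/γ)·g_0(t) dt. Then for every x ∈ [τ_0, τ_{2k−3}]: (𝓗_k Y_n)(x) − Y_n(x) ≥ γ·( (f̌(x) − (𝓗_k f̌)(x)) + (Δ(x) − (𝓗_k Δ)(x)) ). -/

import Mathlib

open Set

/-- `IsHermiteSplineInterp k τ f H` says that `H` is a Hermite spline interpolant of `f`
of degree `2k-1` with knots `τ 0 < τ 1 < ⋯ < τ (2k-3)` (interior knots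
`τ 1, …, τ (2k-4)`): `H` is `(2k-2)`-times continuously differentiable on
`[τ 0, τ (2k-3)]`, agrees on each knot interval with a polynomial of degree at most
`2k-1`, and matches values and first derivatives of `f` at all the knots. -/
def IsHermiteSplineInterp (k : ℕ) (τ : ℕ → ℝ) (f H : ℝ → ℝ) : Prop :=
  ContDiffOn ℝ (2*k-2 : ℕ) H (Icc (τ 0) (τ (2*k-3))) ∧
  (∀ i, i < 2*k-3 → ∃ p : Polynomial ℝ, p.natDegree ≤ 2*k-1 ∧
    ∀ x ∈ Icc (τ i) (τ (i+1)), H x = p.eval x) ∧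
  (∀ i, i < 2*k-2 →
    H (τ i) = f (τ i) ∧
    derivWithin H (Icc (τ 0) (τ (2*k-3))) (τ i)
      = derivWithin f (Icc (τ 0) (τ (2*k-3))) (τ i))
/-- spline with knots `τ 0 < ⋯ < τ N`, degree at most `d`, class `C^r` -/
def IsSpl (N : ℕ) (τ : ℕ → ℝ) (d r : ℕ) (f : ℝ → ℝ) : Prop :=
  ContDiffOn ℝ (r : ℕ) f (Icc (τ 0) (τ N)) ∧
  (∀ i, i < N → ∃ p : Polynomial ℝ, p.natDegree ≤ d ∧
    ∀ x ∈ Icc (τ i) (τ (i+1)), f x = p.eval x)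

/-- `m` zeros which are pairwise separated by points where `f` is nonzero -/
def SepZ (f : ℝ → ℝ) (a b : ℝ) (m : ℕ) : Prop :=
  ∃ z : ℕ → ℝ, (∀ i, i < m → z i ∈ Icc a b ∧ f (z i) = 0) ∧
    (∀ i, i + 1 < m → z i < z (i+1) ∧ ∃ y ∈ Ioo (z i) (z (i+1)), f y ≠ 0)

lemma knots_mono {N : ℕ} {τ : ℕ → ℝ} (hτ : ∀ j, j < N → τ j < τ (j+1)) {i j : ℕ}
    (hij : i ≤ j) (hj : j ≤ N) : τ i ≤ τ j := by
  induction j, hij using Nat.le_induction with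
  | base => exact le_rfl
  | succ j hij ih => exact (ih (by omega)).trans (hτ j (by omega)).le

lemma knots_cover {N : ℕ} {τ : ℕ → ℝ} (hN : 1 ≤ N) {x : ℝ}
    (hx : x ∈ Icc (τ 0) (τ N)) : ∃ i, i < N ∧ x ∈ Icc (τ i) (τ (i+1)) := by
  induction N, hN using Nat.le_induction with
  | base => exact ⟨0, by omega, hx⟩
  | succ N hN ih =>
    rcases le_total x (τ N) with h | h
    · obtain ⟨i, hi, h⟩ := ih ⟨hx.1, h⟩
      exact ⟨i, by omega, h⟩
    · exact ⟨N, by omega, h, hx.2⟩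

lemma rolle_ne {f f' : ℝ → ℝ} {a b : ℝ} (hc : ContinuousOn f (Icc a b))
    (hd : ∀ x ∈ Ioo a b, HasDerivAt f (f' x) x) (ha : f a = 0) (hb : f b = 0)
    {y : ℝ} (hy : y ∈ Ioo a b) (hfy : f y ≠ 0) :
    ∃ w ∈ Ioo a b, f' w = 0 ∧ f w ≠ 0 := by
  obtain ⟨w, hw, hmax⟩ := (isCompact_Icc (a := a) (b := b)).exists_isMaxOn
    ⟨y, Ioo_subset_Icc_self hy⟩ (hc.pow 2)
  have h1 : f y ^ 2 ≤ f w ^ 2 := hmax (Ioo_subset_Icc_self hy)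
  have h2 : 0 < f y ^ 2 := by positivity
  have hfw : f w ≠ 0 := by
    intro h; rw [h] at h1; norm_num at h1; exact hfy h1
  have hwI : w ∈ Ioo a b := by
    refine ⟨lt_of_le_of_ne hw.1 ?_, lt_of_le_of_ne hw.2 ?_⟩
    · rintro rfl; exact hfw ha
    · rintro rfl; exact hfw hb
  have hloc : IsLocalMax (f ^ 2) w :=
    hmax.isLocalMax (Icc_mem_nhds hwI.1 hwI.2)
  have hder : HasDerivAt (f ^ 2) (2 * f w * f' w) w := by
    have := (hd w hwI).pow 2
    simpa using this
  have := hloc.hasDerivAt_eq_zero hder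
  refine ⟨w, hwI, ?_, hfw⟩
  simpa [hfw] using this

lemma mvt_ne {f f' : ℝ → ℝ} {a b : ℝ} (hab : a < b) (hc : ContinuousOn f (Icc a b))
    (hd : ∀ x ∈ Ioo a b, HasDerivAt f (f' x) x) (h : f a ≠ f b) :
    ∃ c ∈ Ioo a b, f' c ≠ 0 := by
  obtain ⟨c, hc, h'⟩ := exists_hasDerivAt_eq_slope f f' hab hc hd
  refine ⟨c, hc, ?_⟩
  rw [h']
  exact div_ne_zero (sub_ne_zero.2 h.symm) (sub_ne_zero.2 hab.ne')

lemma sepZ_rolle {f f' : ℝ → ℝ} {a b : ℝ} {m : ℕ} (hc : ContinuousOn f (Icc a b))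
    (hd : ∀ x ∈ Ioo a b, HasDerivAt f (f' x) x) (h : SepZ f a b (m+1)) : SepZ f' a b m := by
  obtain ⟨z, hz, hs⟩ := h
  have key : ∀ i, ∃ w, i < m → w ∈ Ioo (z i) (z (i+1)) ∧ f' w = 0 ∧ f w ≠ 0 := by
    intro i
    by_cases hi : i < m
    · obtain ⟨h1, y, hy, hfy⟩ := hs i (by omega)
      obtain ⟨w, hw⟩ := rolle_ne (f' := f')
        (hc.mono (Icc_subset_Icc (hz i (by omega)).1.1 (hz (i+1) (by omega)).1.2))
        (fun x hx => hd x ⟨(hz i (by omega)).1.1.trans_lt hx.1,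
          hx.2.trans_le (hz (i+1) (by omega)).1.2⟩)
        (hz i (by omega)).2 (hz (i+1) (by omega)).2 hy hfy
      exact ⟨w, fun _ => hw⟩
    · exact ⟨0, fun h => absurd h hi⟩
  choose w hw using key
  refine ⟨w, fun i hi => ⟨⟨(hz i (by omega)).1.1.trans (hw i hi).1.1.le,
    (hw i hi).1.2.le.trans (hz (i+1) (by omega)).1.2⟩, (hw i hi).2.1⟩, fun i hi => ?_⟩
  have h1 := hw i (by omega)
  have h2 := hw (i+1) hi
  have h3 := hz (i+1) (by omega)
  have h4 := hz i (by omega)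
  refine ⟨h1.1.2.trans h2.1.1, ?_⟩
  obtain ⟨c, hc', hne⟩ := mvt_ne (f := f) (f' := f') h1.1.2
    (hc.mono (Icc_subset_Icc (h4.1.1.trans h1.1.1.le) h3.1.2))
    (fun x hx => hd x ⟨(h4.1.1.trans h1.1.1.le).trans_lt hx.1, hx.2.trans_le h3.1.2⟩)
    (by rw [h3.2]; exact h1.2.2)
  exact ⟨c, ⟨hc'.1, hc'.2.trans h2.1.1⟩, hne⟩

lemma sepZ_double {f f' : ℝ → ℝ} {N : ℕ} {τ : ℕ → ℝ} (hτ : ∀ j, j < N → τ j < τ (j+1))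
    (hc : ContinuousOn f (Icc (τ 0) (τ N)))
    (hd : ∀ x ∈ Ioo (τ 0) (τ N), HasDerivAt f (f' x) x)
    (h0 : ∀ i, i ≤ N → f (τ i) = 0) (h1 : ∀ i, i ≤ N → f' (τ i) = 0)
    (hne : ∀ i, i < N → ∃ y ∈ Ioo (τ i) (τ (i+1)), f y ≠ 0) :
    SepZ f' (τ 0) (τ N) (2*N+1) := by
  have key : ∀ i, ∃ w, i < N → w ∈ Ioo (τ i) (τ (i+1)) ∧ f' w = 0 ∧ f w ≠ 0 := by
    intro i
    by_cases hi : i < N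
    · obtain ⟨y, hy, hfy⟩ := hne i hi
      have e1 := knots_mono hτ (Nat.zero_le i) hi.le
      have e2 := knots_mono hτ (show i+1 ≤ N by omega) le_rfl
      obtain ⟨w, hw⟩ := rolle_ne (f' := f') (hc.mono (Icc_subset_Icc e1 e2))
        (fun x hx => hd x ⟨e1.trans_lt hx.1, hx.2.trans_le e2⟩)
        (h0 i hi.le) (h0 (i+1) hi) hy hfy
      exact ⟨w, fun _ => hw⟩
    · exact ⟨0, fun h => absurd h hi⟩
  choose w hw using key
  refine ⟨fun j => if j % 2 = 0 then τ (j/2) else w (j/2), fun j hj => ?_, fun j hj => ?_⟩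
  · rcases Nat.mod_two_eq_zero_or_one j with h | h
    · simp only [h, if_true]
      exact ⟨⟨knots_mono hτ (Nat.zero_le _) (by omega), knots_mono hτ (by omega) le_rfl⟩,
        h1 _ (by omega)⟩
    · simp only [h, one_ne_zero, if_false]
      have := hw (j/2) (by omega)
      exact ⟨⟨(knots_mono hτ (Nat.zero_le _) (by omega)).trans this.1.1.le,
        this.1.2.le.trans (knots_mono hτ (by omega) le_rfl)⟩, this.2.1⟩
  · have hlt : j/2 < N := by omega
    have H := hw (j/2) hlt
    have e1 := knots_mono hτ (Nat.zero_le (j/2)) hlt.le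
    have e2 := knots_mono hτ (show j/2+1 ≤ N by omega) le_rfl
    rcases Nat.mod_two_eq_zero_or_one j with h | h
    · have h' : (j+1) % 2 = 1 := by omega
      have h'' : (j+1)/2 = j/2 := by omega
      simp only [h, h', h'', if_true, one_ne_zero, if_false]
      refine ⟨H.1.1, mvt_ne (f := f) H.1.1
        (hc.mono (Icc_subset_Icc e1 (H.1.2.le.trans e2)))
        (fun x hx => hd x ⟨e1.trans_lt hx.1, hx.2.trans (H.1.2.trans_le e2)⟩) ?_⟩
      rw [h0 _ hlt.le]; exact H.2.2.symm
    · have h' : (j+1) % 2 = 0 := by omega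
      have h'' : (j+1)/2 = j/2+1 := by omega
      simp only [h, h', h'', if_true, one_ne_zero, if_false]
      refine ⟨H.1.2, mvt_ne (f := f) H.1.2
        (hc.mono (Icc_subset_Icc (e1.trans H.1.1.le) e2))
        (fun x hx => hd x ⟨(e1.trans_lt H.1.1).trans hx.1, hx.2.trans_le e2⟩) ?_⟩
      rw [h0 _ hlt]; exact H.2.2

lemma sepZ_linear_false {f : ℝ → ℝ} {N : ℕ} {τ : ℕ → ℝ} (hN : 1 ≤ N)
    (hp : ∀ i, i < N → ∃ p : Polynomial ℝ, p.natDegree ≤ 1 ∧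
      ∀ x ∈ Icc (τ i) (τ (i+1)), f x = p.eval x)
    (h : SepZ f (τ 0) (τ N) (N+1)) : False := by
  obtain ⟨z, hz, hs⟩ := h
  have step : ∀ i, i < N → τ i ≤ z i → τ (i+1) < z (i+1) := by
    intro i hi hle
    by_contra hcon
    push Not at hcon
    obtain ⟨p, hdeg, hpe⟩ := hp i hi
    obtain ⟨a, b, rfl⟩ := Polynomial.exists_eq_X_add_C_of_natDegree_le_one hdeg
    obtain ⟨hlt, y, hy, hfy⟩ := hs i (by omega)
    have e1 := hpe (z i) ⟨hle, hlt.le.trans hcon⟩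
    have e2 := hpe (z (i+1)) ⟨hle.trans hlt.le, hcon⟩
    have e3 := hpe y ⟨hle.trans hy.1.le, hy.2.le.trans hcon⟩
    rw [(hz _ (by omega)).2] at e1 e2
    simp at e1 e2 e3
    have ha : a * (z (i+1) - z i) = 0 := by linarith
    rcases mul_eq_zero.1 ha with ha | ha
    · subst ha; apply hfy; rw [e3]; linarith
    · linarith
  have all : ∀ i, i ≤ N → τ i ≤ z i := by
    intro i
    induction i with
    | zero => intro _; exact (hz 0 (by omega)).1.1
    | succ i ih => intro hi; exact (step i (by omega) (ih (by omega))).le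
  obtain ⟨M, rfl⟩ : ∃ M, N = M + 1 := ⟨N-1, by omega⟩
  have := step M (by omega) (all M (by omega))
  exact absurd (hz (M+1) (by omega)).1.2 (not_le.2 this)

lemma piece_deriv {s : ℝ → ℝ} {N d r : ℕ} {τ : ℕ → ℝ} (hτ : ∀ j, j < N → τ j < τ (j+1))
    (hs : IsSpl N τ d r s) {i : ℕ} (hi : i < N) {p : Polynomial ℝ}
    (hp : ∀ x ∈ Icc (τ i) (τ (i+1)), s x = p.eval x) (j : ℕ) (hj : j ≤ r) :
    ∀ x ∈ Icc (τ i) (τ (i+1)), iteratedDerivWithin j s (Icc (τ 0) (τ N)) x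
      = ((Polynomial.derivative)^[j] p).eval x := by
  have e1 := knots_mono hτ (Nat.zero_le i) hi.le
  have e2 := knots_mono hτ (show i+1 ≤ N by omega) le_rfl
  have e3 := hτ i hi
  have hU : UniqueDiffOn ℝ (Icc (τ 0) (τ N)) :=
    uniqueDiffOn_Icc (e1.trans_lt (e3.trans_le e2))
  have hopen : ∀ x ∈ Ioo (τ i) (τ (i+1)), iteratedDerivWithin j s (Icc (τ 0) (τ N)) x
      = ((Polynomial.derivative)^[j] p).eval x := by
    clear hj
    induction j with
    | zero => intro x hx; simpa using hp x (Ioo_subset_Icc_self hx)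
    | succ j ih =>
      intro x hx
      rw [iteratedDerivWithin_succ, derivWithin_of_mem_nhds
        (Icc_mem_nhds (e1.trans_lt hx.1) (hx.2.trans_le e2)), Function.iterate_succ_apply',
        ← Polynomial.deriv]
      apply Filter.EventuallyEq.deriv_eq
      filter_upwards [Ioo_mem_nhds hx.1 hx.2] with y hy
      exact ih y hy
  refine EqOn.of_subset_closure (s := Ioo (τ i) (τ (i+1))) hopen ?_ ?_ Ioo_subset_Icc_self ?_
  · exact (hs.1.continuousOn_iteratedDerivWithin (by exact_mod_cast hj) hU).mono
      (Icc_subset_Icc e1 e2)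
  · exact (Polynomial.continuous _).continuousOn
  · rw [closure_Ioo e3.ne]

lemma poly_zero_of_high_root {p : Polynomial ℝ} {M : ℕ} {a b : ℝ} (hab : a ≠ b)
    (hdeg : p.natDegree ≤ M + 1)
    (h : ∀ j, j ≤ M → ((Polynomial.derivative)^[j] p).eval a = 0) (hb : p.eval b = 0) :
    p = 0 := by
  by_contra hp
  have h1 := Polynomial.lt_rootMultiplicity_of_isRoot_iterate_derivative (n := M) hp h
  have h2 := (Polynomial.le_rootMultiplicity_iff hp).1 (Nat.succ_le_of_lt h1)
  obtain ⟨q, hq⟩ := h2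
  have hq0 : q ≠ 0 := by rintro rfl; simp at hq; exact hp hq
  have hX : (Polynomial.X - Polynomial.C a) ^ (M.succ) ≠ 0 :=
    pow_ne_zero _ (Polynomial.X_sub_C_ne_zero a)
  have hdq : q.natDegree = 0 := by
    rw [hq, Polynomial.natDegree_mul hX hq0, Polynomial.natDegree_pow,
      Polynomial.natDegree_X_sub_C] at hdeg
    omega
  rw [Polynomial.eq_C_of_natDegree_eq_zero hdq] at hq hq0
  rw [hq] at hb
  simp [sub_eq_zero, hab.symm] at hb
  apply hq0; rw [hb]; simp

lemma spline_unique {s : ℝ → ℝ} {N : ℕ} {τ : ℕ → ℝ} (hN : 1 ≤ N)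
    (hτ : ∀ j, j < N → τ j < τ (j+1)) (hs : IsSpl N τ (N+2) (N+1) s)
    (h0 : ∀ i, i ≤ N → s (τ i) = 0)
    (h1 : ∀ i, i ≤ N → derivWithin s (Icc (τ 0) (τ N)) (τ i) = 0) :
    ∀ x ∈ Icc (τ 0) (τ N), s x = 0 := by
  have h0N : τ 0 < τ N := (hτ 0 hN).trans_le (knots_mono hτ hN le_rfl)
  have hU : UniqueDiffOn ℝ (Icc (τ 0) (τ N)) := uniqueDiffOn_Icc h0N
  choose! p hpd hp using hs.2
  have D := fun i (hi : i < N) => piece_deriv hτ hs hi (hp i hi)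
  have zero_of : ∀ i, i < N → (∀ y ∈ Ioo (τ i) (τ (i+1)), s y = 0) → p i = 0 := by
    intro i hi h
    apply Polynomial.eq_zero_of_infinite_isRoot
    refine (Ioo_infinite (hτ i hi)).mono fun y hy => ?_
    show (p i).eval y = 0
    rw [← hp i hi y (Ioo_subset_Icc_self hy)]; exact h y hy
  have up : ∀ i, i + 1 < N → p i = 0 → p (i+1) = 0 := by
    intro i hi h
    refine poly_zero_of_high_root (M := N+1) (hτ (i+1) hi).ne (hpd _ hi) (fun j hj => ?_) ?_
    · rw [← D (i+1) hi j hj _ (left_mem_Icc.2 (hτ (i+1) hi).le),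
        D i (by omega) j hj _ (right_mem_Icc.2 (hτ i (by omega)).le), h]
      simp
    · rw [← hp (i+1) hi _ (right_mem_Icc.2 (hτ (i+1) hi).le)]; exact h0 _ (by omega)
  have down : ∀ i, i + 1 < N → p (i+1) = 0 → p i = 0 := by
    intro i hi h
    refine poly_zero_of_high_root (M := N+1) (hτ i (by omega)).ne' (hpd _ (by omega))
      (fun j hj => ?_) ?_
    · rw [← D i (by omega) j hj _ (right_mem_Icc.2 (hτ i (by omega)).le),
        D (i+1) hi j hj _ (left_mem_Icc.2 (hτ (i+1) hi).le), h]
      simp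
    · rw [← hp i (by omega) _ (left_mem_Icc.2 (hτ i (by omega)).le)]; exact h0 _ (by omega)
  have equiv0 : ∀ i, i < N → (p i = 0 ↔ p 0 = 0) := by
    intro i
    induction i with
    | zero => intro _; rfl
    | succ i ih => intro hi; exact ⟨fun h => (ih (by omega)).1 (down i hi h),
        fun h => up i hi ((ih (by omega)).2 h)⟩
  by_cases hz : p 0 = 0
  · intro x hx
    obtain ⟨i, hi, hxi⟩ := knots_cover hN hx
    rw [hp i hi x hxi, (equiv0 i hi).2 hz]; simp
  exfalso
  have hne : ∀ i, i < N → ∃ y ∈ Ioo (τ i) (τ (i+1)), s y ≠ 0 := by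
    intro i hi
    by_contra hcon
    push Not at hcon
    exact hz ((equiv0 i hi).1 (zero_of i hi hcon))
  have hcont : ∀ j, j ≤ N+1 → ContinuousOn (iteratedDerivWithin j s (Icc (τ 0) (τ N)))
      (Icc (τ 0) (τ N)) := fun j hj =>
    hs.1.continuousOn_iteratedDerivWithin (by exact_mod_cast hj) hU
  have hder : ∀ j, j < N+1 → ∀ x ∈ Ioo (τ 0) (τ N),
      HasDerivAt (iteratedDerivWithin j s (Icc (τ 0) (τ N)))
        (iteratedDerivWithin (j+1) s (Icc (τ 0) (τ N)) x) x := by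
    intro j hj x hx
    have hd := hs.1.differentiableOn_iteratedDerivWithin (m := j) (by exact_mod_cast hj) hU
    rw [iteratedDerivWithin_succ]
    exact (hd x (Ioo_subset_Icc_self hx)).hasDerivWithinAt.hasDerivAt (Icc_mem_nhds hx.1 hx.2)
  have hsep : ∀ j, j ≤ N → SepZ (iteratedDerivWithin (j+1) s (Icc (τ 0) (τ N))) (τ 0) (τ N)
      (2*N+1-j) := by
    intro j
    induction j with
    | zero =>
      intro _
      have a0 := hcont 0 (by omega)
      have b0 := hder 0 (by omega)
      rw [iteratedDerivWithin_zero] at a0 b0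
      refine sepZ_double hτ a0 b0 h0 (fun i hi => ?_) hne
      rw [iteratedDerivWithin_one]; exact h1 i hi
    | succ j ih =>
      intro hj
      refine sepZ_rolle (hcont (j+1) (by omega)) (hder (j+1) (by omega)) ?_
      have := ih (by omega)
      rwa [show 2*N+1-j = 2*N+1-(j+1)+1 by omega] at this
  have hfin := hsep N le_rfl
  rw [show 2*N+1-N = N+1 by omega] at hfin
  refine sepZ_linear_false hN (fun i hi => ⟨_, ?_, D i hi (N+1) le_rfl⟩) hfin
  refine (Polynomial.natDegree_iterate_derivative _ _).trans ?_
  have := hpd i hi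
  omega

lemma ii_of_cont {g : ℝ → ℝ} (hg : ContinuousOn g (Ioi 0)) {a b : ℝ} (ha : 0 < a) (hb : 0 < b) :
    IntervalIntegrable g MeasureTheory.volume a b := by
  apply ContinuousOn.intervalIntegrable
  refine hg.mono fun y hy => ?_
  exact lt_of_lt_of_le (lt_min ha hb) hy.1

lemma prim_hasDerivAt {g : ℝ → ℝ} (hg : ContinuousOn g (Ioi 0)) {a x : ℝ} (ha : 0 < a)
    (hx : 0 < x) : HasDerivAt (fun u => ∫ s in a..u, g s) (g x) x :=
  intervalIntegral.integral_hasDerivAt_right (ii_of_cont hg ha hx)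
    (hg.stronglyMeasurableAtFilter isOpen_Ioi x hx) (hg.continuousAt (Ioi_mem_nhds hx))

lemma prim_continuousOn {g : ℝ → ℝ} (hg : ContinuousOn g (Ioi 0)) {a : ℝ} (ha : 0 < a) :
    ContinuousOn (fun u => ∫ s in a..u, g s) (Ioi 0) := fun _ hx =>
  (prim_hasDerivAt hg ha hx).continuousAt.continuousWithinAt

/-- iterated integral -/
noncomputable def II (a : ℝ) (m : ℕ) (g : ℝ → ℝ) (t : ℝ) : ℝ :=
  ∫ s in a..t, ((t - s) ^ m / (Nat.factorial m : ℝ)) * g s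

lemma II_zero (a : ℝ) (g : ℝ → ℝ) : II a 0 g = fun t => ∫ s in a..t, g s := by
  funext t; simp [II]

lemma II_succ {g : ℝ → ℝ} (hg : ContinuousOn g (Ioi 0)) {a t : ℝ} (ha : 0 < a) (ht : 0 < t)
    (m : ℕ) : II a (m+1) g t = II a m (fun u => ∫ s in a..u, g s) t := by
  have hpos : ∀ y ∈ uIcc a t, 0 < y := fun y hy => lt_of_lt_of_le (lt_min ha ht) hy.1
  have := intervalIntegral.integral_mul_deriv_eq_deriv_mul (a := a) (b := t)
    (u := fun s => (t - s) ^ (m+1) / (Nat.factorial (m+1) : ℝ))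
    (u' := fun s => - ((t - s) ^ m / (Nat.factorial m : ℝ)))
    (v := fun u => ∫ s in a..u, g s) (v' := g)
    (fun y _ => by
      have h1 : HasDerivAt (fun s : ℝ => t - s) (-1) y := by
        simpa using (hasDerivAt_id y).const_sub t
      have h2 := (h1.fun_pow (m+1)).div_const (Nat.factorial (m+1) : ℝ)
      convert h2 using 1
      have hf : (Nat.factorial m : ℝ) ≠ 0 := by positivity
      rw [Nat.factorial_succ]
      push_cast
      have : (m : ℝ) + 1 ≠ 0 := by positivity
      field_simp)
    (fun y hy => prim_hasDerivAt hg ha (hpos y hy))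
    (by apply Continuous.intervalIntegrable; fun_prop)
    (ii_of_cont hg ha ht)
  simp only [II]
  rw [this]
  simp

lemma II_diff {a : ℝ} (ha : 0 < a) (m : ℕ) : ∀ {g : ℝ → ℝ}, ContinuousOn g (Ioi 0) →
    ∀ t, 0 < t → DifferentiableAt ℝ (II a m g) t := by
  induction m with
  | zero =>
    intro g hg t ht
    rw [II_zero]
    exact (prim_hasDerivAt hg ha ht).differentiableAt
  | succ m ih =>
    intro g hg t ht
    refine (ih (prim_continuousOn hg ha) t ht).congr_of_eventuallyEq ?_
    filter_upwards [Ioi_mem_nhds ht] with y hy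
    exact II_succ hg ha hy m

lemma poly_antideriv (p : Polynomial ℝ) (d : ℕ) (hd : p.natDegree ≤ d) :
    ∃ q : Polynomial ℝ, q.natDegree ≤ d + 1 ∧ Polynomial.derivative q = p := by
  refine ⟨∑ i ∈ Finset.range (d+1), Polynomial.monomial (i+1) (p.coeff i / (i+1)), ?_, ?_⟩
  · apply Polynomial.natDegree_sum_le_of_forall_le
    intro i hi
    refine (Polynomial.natDegree_monomial_le _).trans ?_
    have := Finset.mem_range.1 hi
    omega
  · conv_rhs => rw [p.as_sum_range' (d+1) (by omega)]
    rw [Polynomial.derivative_sum]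
    refine Finset.sum_congr rfl fun i _ => ?_
    rw [Polynomial.derivative_monomial]
    simp only [Nat.add_sub_cancel]
    congr 1
    have : (i : ℝ) + 1 ≠ 0 := by positivity
    push_cast
    field_simp

lemma IsSpl.prim {N d r : ℕ} {τ : ℕ → ℝ} {g : ℝ → ℝ} (hN : 1 ≤ N)
    (hτ : ∀ j, j < N → τ j < τ (j+1)) (hτ0 : 0 < τ 0) (hg : ContinuousOn g (Ioi 0))
    (h : IsSpl N τ d r g) : IsSpl N τ (d+1) (r+1) (fun u => ∫ s in (τ 0)..u, g s) := by
  have h0N : τ 0 < τ N := (hτ 0 hN).trans_le (knots_mono hτ hN le_rfl)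
  have hU : UniqueDiffOn ℝ (Icc (τ 0) (τ N)) := uniqueDiffOn_Icc h0N
  have hder : ∀ x ∈ Icc (τ 0) (τ N), HasDerivWithinAt (fun u => ∫ s in (τ 0)..u, g s) (g x)
      (Icc (τ 0) (τ N)) x := fun x hx =>
    (prim_hasDerivAt hg hτ0 (hτ0.trans_le hx.1)).hasDerivWithinAt
  refine ⟨?_, fun i hi => ?_⟩
  · push_cast
    rw [contDiffOn_succ_iff_derivWithin hU]
    refine ⟨fun x hx => (hder x hx).differentiableWithinAt, fun hh => ?_, ?_⟩
    · exact absurd hh (by simp)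
    · exact h.1.congr fun x hx => (hder x hx).derivWithin (hU x hx)
  · obtain ⟨p, hpd, hp⟩ := h.2 i hi
    obtain ⟨q, hqd, hq⟩ := poly_antideriv p d hpd
    have hi0 : 0 < τ i := hτ0.trans_le (knots_mono hτ (Nat.zero_le i) hi.le)
    refine ⟨q + Polynomial.C ((∫ s in (τ 0)..(τ i), g s) - q.eval (τ i)), ?_, fun x hx => ?_⟩
    · refine (Polynomial.natDegree_add_le _ _).trans ?_
      simpa using hqd
    · have hx0 : 0 < x := hi0.trans_le hx.1
      show (∫ s in (τ 0)..x, g s) = _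
      rw [← intervalIntegral.integral_add_adjacent_intervals (ii_of_cont hg hτ0 hi0)
        (ii_of_cont hg hi0 hx0)]
      have e1 : ∫ s in (τ i)..x, g s = ∫ s in (τ i)..x, p.eval s := by
        apply intervalIntegral.integral_congr
        intro y hy
        rw [uIcc_of_le hx.1] at hy
        exact hp y ⟨hy.1, hy.2.trans hx.2⟩
      have e2 : ∫ s in (τ i)..x, p.eval s = q.eval x - q.eval (τ i) := by
        apply intervalIntegral.integral_eq_sub_of_hasDerivAt
        · intro y _
          rw [← hq]; exact q.hasDerivAt y
        · exact p.continuous.intervalIntegrable _ _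
      rw [e1, e2]
      simp; ring

lemma IsSpl.congr {N d r : ℕ} {τ : ℕ → ℝ} {f g : ℝ → ℝ}
    (hτ : ∀ j, j < N → τ j < τ (j+1)) (h : IsSpl N τ d r f)
    (hfg : ∀ x ∈ Icc (τ 0) (τ N), g x = f x) : IsSpl N τ d r g := by
  refine ⟨h.1.congr hfg, fun i hi => ?_⟩
  obtain ⟨p, hpd, hp⟩ := h.2 i hi
  refine ⟨p, hpd, fun x hx => ?_⟩
  rw [hfg x ⟨(knots_mono hτ (Nat.zero_le i) hi.le).trans hx.1,
    hx.2.trans (knots_mono hτ (by omega) le_rfl)⟩]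
  exact hp x hx

lemma IsSpl.II {N : ℕ} {τ : ℕ → ℝ} (hN : 1 ≤ N)
    (hτ : ∀ j, j < N → τ j < τ (j+1)) (hτ0 : 0 < τ 0) (m : ℕ) :
    ∀ {d r : ℕ} {g : ℝ → ℝ}, ContinuousOn g (Ioi 0) → IsSpl N τ d r g →
      IsSpl N τ (d+m+1) (r+m+1) (II (τ 0) m g) := by
  induction m with
  | zero =>
    intro d r g hg h
    rw [II_zero]
    exact h.prim hN hτ hτ0 hg
  | succ m ih =>
    intro d r g hg h
    have := ih (prim_continuousOn hg hτ0) (h.prim hN hτ hτ0 hg)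
    rw [show d + 1 + m + 1 = d + (m+1) + 1 by ring, show r + 1 + m + 1 = r + (m+1) + 1 by ring]
      at this
    exact this.congr hτ fun x hx => II_succ hg hτ0 (hτ0.trans_le hx.1) m

lemma IsSpl.add {N d r : ℕ} {τ : ℕ → ℝ} {f g : ℝ → ℝ} (hf : IsSpl N τ d r f)
    (hg : IsSpl N τ d r g) : IsSpl N τ d r (fun x => f x + g x) := by
  refine ⟨hf.1.add hg.1, fun i hi => ?_⟩
  obtain ⟨p, hpd, hp⟩ := hf.2 i hi
  obtain ⟨q, hqd, hq⟩ := hg.2 i hi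
  refine ⟨p + q, (Polynomial.natDegree_add_le _ _).trans (max_le hpd hqd), fun x hx => ?_⟩
  simp [hp x hx, hq x hx]

lemma IsSpl.smul {N d r : ℕ} {τ : ℕ → ℝ} {f : ℝ → ℝ} (c : ℝ) (hf : IsSpl N τ d r f) :
    IsSpl N τ d r (fun x => c * f x) := by
  refine ⟨contDiffOn_const.mul hf.1, fun i hi => ?_⟩
  obtain ⟨p, hpd, hp⟩ := hf.2 i hi
  refine ⟨Polynomial.C c * p, (Polynomial.natDegree_C_mul_le _ _).trans hpd, fun x hx => ?_⟩
  simp [hp x hx]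

lemma IsSpl.poly {N d r : ℕ} {τ : ℕ → ℝ} (p : Polynomial ℝ) (hp : p.natDegree ≤ d) :
    IsSpl N τ d r (fun x => p.eval x) :=
  ⟨by simpa using (p.contDiff_aeval (𝕜 := ℝ) (r : ℕ)).contDiffOn, fun _ _ => ⟨p, hp, fun _ _ => rfl⟩⟩

lemma trunc_diff (a : ℝ) (m : ℕ) (hm : 2 ≤ m) (t : ℝ) :
    DifferentiableAt ℝ (fun t => if a ≤ t then (t - a) ^ m else 0) t := by
  rcases lt_trichotomy t a with h | rfl | h
  · refine (differentiableAt_const (0:ℝ)).congr_of_eventuallyEq ?_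
    filter_upwards [Iio_mem_nhds h] with y hy
    simp [not_le.2 (show y < a from hy)]
  · have h1 : HasDerivWithinAt (fun s => if t ≤ s then (s - t) ^ m else 0) 0 (Ici t) t := by
      have : HasDerivAt (fun s => (s - t) ^ m) 0 t := by
        have := ((hasDerivAt_id t).sub_const t).fun_pow m
        simpa [zero_pow (show m - 1 ≠ 0 by omega)] using this
      exact this.hasDerivWithinAt.congr (fun y hy => if_pos hy) (if_pos le_rfl)
    have h2 : HasDerivWithinAt (fun s => if t ≤ s then (s - t) ^ m else 0) 0 (Iic t) t := by
      refine (hasDerivWithinAt_const t (Iic t) (0:ℝ)).congr (fun y hy => ?_) ?_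
      · rcases (show y ≤ t from hy).lt_or_eq with h | rfl
        · simp [not_le.2 h]
        · simp; omega
      · simp; omega
    have := h1.union h2
    rw [Ici_union_Iic] at this
    exact (hasDerivWithinAt_univ.1 this).differentiableAt
  · refine (show DifferentiableAt ℝ (fun t => (t - a) ^ m) t by fun_prop).congr_of_eventuallyEq ?_
    filter_upwards [Ioi_mem_nhds h] with y hy
    simp [(show a < y from hy).le]

lemma II_add {g h : ℝ → ℝ} (hg : ContinuousOn g (Ioi 0)) (hh : ContinuousOn h (Ioi 0)) {a t : ℝ}
    (ha : 0 < a) (ht : 0 < t) (m : ℕ) :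
    II a m g t + II a m h t = II a m (fun s => g s + h s) t := by
  simp only [II]
  rw [← intervalIntegral.integral_add]
  · congr 1; funext s; ring
  · exact ii_of_cont (ContinuousOn.mul (by fun_prop) hg) ha ht
  · exact ii_of_cont (ContinuousOn.mul (by fun_prop) hh) ha ht

lemma II_smul (c : ℝ) (g : ℝ → ℝ) (a t : ℝ) (m : ℕ) :
    c * II a m g t = II a m (fun s => c * g s) t := by
  simp only [II]
  rw [← intervalIntegral.integral_const_mul]
  congr 1; funext s; ring

lemma II_congr {g h : ℝ → ℝ} {a t : ℝ} (ha : 0 < a) (ht : 0 < t) (m : ℕ)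
    (hgh : ∀ s, 0 < s → g s = h s) : II a m g t = II a m h t := by
  simp only [II]
  apply intervalIntegral.integral_congr
  intro s hs
  simp only
  rw [hgh s (lt_of_lt_of_le (lt_min ha ht) hs.1)]

/-- linearized characterization inequality for the MLE (Lemma 4.6 of the
paper): under the MLE characterization hypotheses (H1)–(H3) at the knots
`τ 0 < ⋯ < τ (2k-3)`, the Hermite interpolation error of the empirical process `Yₙ`
dominates `γ` times the sum of the interpolation errors of `f̌` and `Δ`. -/
theorem stmt3 (k : ℕ) (hk : 3 ≤ k) (n : ℕ) (hn : 1 ≤ n)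
    (x : Fin n → ℝ) (hx : ∀ i, 0 < x i)
    (ghat : ℝ → ℝ) (hghat_pos : ∀ t, 0 < t → 0 < ghat t)
    (hghat_cont : ContinuousOn ghat (Ioi 0))
    (τ : ℕ → ℝ) (hτ0 : 0 < τ 0) (hτ : ∀ j, j < 2*k-3 → τ j < τ (j+1))
    -- (H1): for every t > 0, t^k/k ≥ (1/n) ∑_{i : xᵢ ≤ t} (t - xᵢ)^{k-1} / ĝ(xᵢ)
    (H1 : ∀ t : ℝ, 0 < t →
      (1/(n:ℝ)) * ∑ i : Fin n,
          (if x i ≤ t then (t - x i) ^ (k-1) / ghat (x i) else 0)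
        ≤ t ^ k / (k : ℝ))
    -- (H2): equality in (H1) at each τ j, and the derivative condition
    (H2 : ∀ j, j < 2*k-2 →
      (1/(n:ℝ)) * ∑ i : Fin n,
          (if x i ≤ τ j then (τ j - x i) ^ (k-1) / ghat (x i) else 0)
        = (τ j) ^ k / (k : ℝ) ∧
      (1/(n:ℝ)) * ∑ i : Fin n,
          (if x i ≤ τ j then (τ j - x i) ^ (k-2) / ghat (x i) else 0)
        = (τ j) ^ (k-1) / ((k : ℝ) - 1))
    -- (H3): ĝ is a spline of degree k-1 on [τ 0, τ (2k-3)] with knots τ j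
    (H3a : ContDiffOn ℝ (k-2 : ℕ) ghat (Icc (τ 0) (τ (2*k-3))))
    (H3b : ∀ j, j < 2*k-3 → ∃ p : Polynomial ℝ, p.natDegree ≤ k-1 ∧
      ∀ t ∈ Icc (τ j) (τ (j+1)), ghat t = p.eval t)
    (g₀ : ℝ → ℝ) (hg₀_pos : ∀ t, 0 < t → 0 < g₀ t)
    (hg₀_cont : ContinuousOn g₀ (Ioi 0))
    (Yn fch Δ : ℝ → ℝ)
    (hYn : ∀ t, Yn t = (1/(n:ℝ)) * ∑ i : Fin n,
        (if x i ≤ t then (t - x i) ^ (k-1) / (Nat.factorial (k-1) : ℝ) else 0))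
    (hfch : ∀ t, fch t = - ∫ s in (τ 0)..t,
        ((t - s) ^ (k-1) / (Nat.factorial (k-1) : ℝ)) *
          (1 / ghat s - 1 / g₀ (τ 0)) * (ghat s - g₀ s))
    (hΔ : ∀ t, Δ t = (1/(n:ℝ)) * ∑ i : Fin n,
        (if τ 0 < x i ∧ x i ≤ t then
          ((t - x i) ^ (k-1) / (Nat.factorial (k-1) : ℝ)) *
            (1 / ghat (x i) - 1 / g₀ (τ 0))
         else 0)
      - ∫ s in (τ 0)..t,
          ((t - s) ^ (k-1) / (Nat.factorial (k-1) : ℝ)) *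
            (1 / ghat s - 1 / g₀ (τ 0)) * g₀ s)
    (HY Hf HΔ : ℝ → ℝ)
    (hHY : IsHermiteSplineInterp k τ Yn HY)
    (hHf : IsHermiteSplineInterp k τ fch Hf)
    (hHΔ : IsHermiteSplineInterp k τ Δ HΔ) :
    ∀ t ∈ Icc (τ 0) (τ (2*k-3)),
      HY t - Yn t ≥ g₀ (τ 0) * ((fch t - Hf t) + (Δ t - HΔ t)) := by
  
  have hk0 : (0:ℝ) < k := by positivity
  obtain ⟨m, rfl⟩ : ∃ m, k = m + 1 := ⟨k-1, by omega⟩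
  obtain ⟨N, hN⟩ : ∃ N, 2*(m+1)-3 = N := ⟨_, rfl⟩
  have hN2 : 2*(m+1)-2 = N+1 := by omega
  have hN3 : 2*(m+1)-1 = N+2 := by omega
  unfold IsHermiteSplineInterp at hHY hHf hHΔ
  rw [hN] at hτ H3a H3b
  rw [hN, hN2, hN3] at hHY hHf hHΔ
  rw [hN2] at H2
  rw [hN]
  simp only [Nat.add_sub_cancel] at *
  have hN1 : 1 ≤ N := by omega
  have hm : 2 ≤ m := by omega
  set γ := g₀ (τ 0) with hγdef
  have hγ : 0 < γ := hg₀_pos _ hτ0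
  have hfac : (0:ℝ) < (Nat.factorial m : ℝ) := by positivity
  have h0N : τ 0 < τ N := (hτ 0 hN1).trans_le (knots_mono hτ hN1 le_rfl)
  have hU : UniqueDiffOn ℝ (Icc (τ 0) (τ N)) := uniqueDiffOn_Icc h0N
  have hpos : ∀ t ∈ Icc (τ 0) (τ N), 0 < t := fun t ht => hτ0.trans_le ht.1
  -- the nonnegative function W
  obtain ⟨W, hW⟩ : ∃ W : ℝ → ℝ, ∀ t, W t = (t ^ (m+1) / ((m+1 : ℕ) : ℝ) - (1/(n:ℝ)) * ∑ i : Fin n,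
      (if x i ≤ t then (t - x i) ^ m / ghat (x i) else 0)) / (Nat.factorial m : ℝ) :=
    ⟨_, fun _ => rfl⟩
  have hWnn : ∀ t, 0 < t → 0 ≤ W t := fun t ht => by
    rw [hW]; exact div_nonneg (sub_nonneg.2 (H1 t ht)) hfac.le
  have hWτ : ∀ j, j ≤ N → W (τ j) = 0 := fun j hj => by
    rw [hW, (H2 j (by omega)).1]; simp
  have hsumdiff : ∀ (c : Fin n → ℝ) t, DifferentiableAt ℝ
      (fun t => (1/(n:ℝ)) * ∑ i : Fin n, (if x i ≤ t then (t - x i) ^ m else 0) * c i) t := by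
    intro c t
    refine DifferentiableAt.const_mul (DifferentiableAt.fun_sum fun i _ => ?_) _
    exact (trunc_diff (x i) m hm t).mul_const _
  have hWd : ∀ t, DifferentiableAt ℝ W t := by
    intro t
    have : W = fun t => (t ^ (m+1) / ((m+1 : ℕ) : ℝ) - (1/(n:ℝ)) * ∑ i : Fin n,
      (if x i ≤ t then (t - x i) ^ m else 0) * (1 / ghat (x i))) / (Nat.factorial m : ℝ) := by
      funext t
      rw [hW]
      congr 3
      refine Finset.sum_congr rfl fun i _ => ?_
      split_ifs
      · ring
      · ring
    rw [this]
    exact (DifferentiableAt.sub (by fun_prop) (hsumdiff _ t)).div_const _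
  have hWder : ∀ j, j ≤ N → HasDerivAt W 0 (τ j) := by
    intro j hj
    have hp : 0 < τ j := hτ0.trans_le (knots_mono hτ (Nat.zero_le j) hj)
    have hmin : IsLocalMin W (τ j) := by
      filter_upwards [Ioi_mem_nhds hp] with y hy
      rw [hWτ j hj]; exact hWnn y hy
    rw [← hmin.deriv_eq_zero]
    exact (hWd _).hasDerivAt
  -- differentiability
  have hinv : ContinuousOn (fun s => 1 / ghat s - 1 / γ) (Ioi 0) :=
    (continuousOn_const.div hghat_cont fun s hs => (hghat_pos s hs).ne').sub continuousOn_const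
  have hc1 : ContinuousOn (fun s => (1 / ghat s - 1 / γ) * (ghat s - g₀ s)) (Ioi 0) :=
    hinv.mul (hghat_cont.sub hg₀_cont)
  have hc2 : ContinuousOn (fun s => (1 / ghat s - 1 / γ) * g₀ s) (Ioi 0) :=
    hinv.mul hg₀_cont
  have hc3 : ContinuousOn (fun s => ghat s + -γ) (Ioi 0) := hghat_cont.add continuousOn_const
  have hf' : fch = fun t => - II (τ 0) m (fun s => (1 / ghat s - 1 / γ) * (ghat s - g₀ s)) t := by
    funext t; rw [hfch]; simp only [II, mul_assoc]
  have hΔ' : Δ = fun t => (1/(n:ℝ)) * ∑ i : Fin n, (if x i ≤ t then (t - x i) ^ m else 0) *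
      (if τ 0 < x i then (1 / ghat (x i) - 1 / γ) / (Nat.factorial m : ℝ) else 0)
      - II (τ 0) m (fun s => (1 / ghat s - 1 / γ) * g₀ s) t := by
    funext t; rw [hΔ]; simp only [II, mul_assoc]
    congr 2
    refine Finset.sum_congr rfl fun i _ => ?_
    by_cases h1 : τ 0 < x i <;> by_cases h2 : x i ≤ t <;> simp [h1, h2]
    ring
  have hY' : Yn = fun t => (1/(n:ℝ)) * ∑ i : Fin n, (if x i ≤ t then (t - x i) ^ m else 0) *
      (1 / (Nat.factorial m : ℝ)) := by
    funext t; rw [hYn]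
    congr 1
    refine Finset.sum_congr rfl fun i _ => ?_
    split_ifs
    · ring
    · ring
  have hYd : ∀ t, 0 < t → DifferentiableAt ℝ Yn t := fun t _ => by
    rw [hY']; exact hsumdiff _ t
  have hfd : ∀ t, 0 < t → DifferentiableAt ℝ fch t := fun t ht => by
    rw [hf']; exact (II_diff hτ0 m hc1 t ht).neg
  have hΔd : ∀ t, 0 < t → DifferentiableAt ℝ Δ t := fun t ht => by
    rw [hΔ']; exact (hsumdiff _ t).sub (II_diff hτ0 m hc2 t ht)
  -- the spline S
  obtain ⟨P, hP⟩ : ∃ P : Polynomial ℝ, P = Polynomial.C (γ / (((m+1 : ℕ) : ℝ) * (Nat.factorial m : ℝ)))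
      * Polynomial.X ^ (m+1) + Polynomial.C (1/(n:ℝ)) * ∑ i : Fin n,
        Polynomial.C (if x i ≤ τ 0 then (1 - γ / ghat (x i)) / (Nat.factorial m : ℝ) else 0) *
          (Polynomial.X - Polynomial.C (x i)) ^ m := ⟨_, rfl⟩
  have hPd : P.natDegree ≤ N + 2 := by
    rw [hP]
    refine (Polynomial.natDegree_add_le _ _).trans (max_le ?_ ?_)
    · exact (Polynomial.natDegree_C_mul_X_pow_le _ _).trans (by omega)
    · refine (Polynomial.natDegree_C_mul_le _ _).trans ?_
      apply Polynomial.natDegree_sum_le_of_forall_le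
      intro i _
      refine (Polynomial.natDegree_C_mul_le _ _).trans ?_
      rw [Polynomial.natDegree_pow, Polynomial.natDegree_X_sub_C]
      omega
  obtain ⟨S, hS⟩ : ∃ S : ℝ → ℝ, S = fun t => P.eval t + II (τ 0) m (fun s => ghat s + -γ) t :=
    ⟨_, rfl⟩
  have hSspl : IsSpl N τ (N+2) (N+1) S := by
    rw [hS]
    refine (IsSpl.poly P hPd).add ?_
    have hg : IsSpl N τ m (m - 1) (fun s => ghat s + -γ) := by
      have h1 : IsSpl N τ m (m - 1) ghat := by
        refine ⟨?_, H3b⟩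
        rwa [show m + 1 - 2 = m - 1 by omega] at H3a
      have h2 : IsSpl N τ m (m-1) (fun s => (Polynomial.C (-γ)).eval s) :=
        IsSpl.poly _ (by simp)
      simpa using h1.add h2
    have := IsSpl.II hN1 hτ hτ0 m hc3 hg
    rwa [show m + m + 1 = N + 2 by omega, show m - 1 + m + 1 = N + 1 by omega] at this
  have hident : ∀ t ∈ Icc (τ 0) (τ N), Yn t + γ * (fch t + Δ t) = S t - γ * W t := by
    intro t ht
    have ht0 := hpos t ht
    have e1 : II (τ 0) m (fun s => (1 / ghat s - 1 / γ) * (ghat s - g₀ s)) t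
        + II (τ 0) m (fun s => (1 / ghat s - 1 / γ) * g₀ s) t
        = (-(1/γ)) * II (τ 0) m (fun s => ghat s + -γ) t := by
      rw [II_add hc1 hc2 hτ0 ht0, II_smul]
      refine II_congr hτ0 ht0 m fun s hs => ?_
      have := (hghat_pos s hs).ne'
      field_simp
      ring
    have e2 : γ * (II (τ 0) m (fun s => (1 / ghat s - 1 / γ) * (ghat s - g₀ s)) t
        + II (τ 0) m (fun s => (1 / ghat s - 1 / γ) * g₀ s) t)
        = - II (τ 0) m (fun s => ghat s + -γ) t := by
      rw [e1]; field_simp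
    have e3 : ∑ i : Fin n, (if x i ≤ t then (t - x i) ^ m else 0) * (1 / (Nat.factorial m : ℝ))
        + γ * ∑ i : Fin n, (if x i ≤ t then (t - x i) ^ m else 0) *
          (if τ 0 < x i then (1 / ghat (x i) - 1 / γ) / (Nat.factorial m : ℝ) else 0)
        = ∑ i : Fin n, (if x i ≤ τ 0 then (1 - γ / ghat (x i)) / (Nat.factorial m : ℝ) else 0) *
          (t - x i) ^ m + γ / (Nat.factorial m : ℝ) * ∑ i : Fin n,
          (if x i ≤ t then (t - x i) ^ m / ghat (x i) else 0) := by
      rw [Finset.mul_sum, Finset.mul_sum, ← Finset.sum_add_distrib, ← Finset.sum_add_distrib]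
      refine Finset.sum_congr rfl fun i _ => ?_
      have hgi := (hghat_pos _ (hx i)).ne'
      rcases le_or_gt (x i) (τ 0) with h | h
      · rw [if_pos (h.trans ht.1), if_neg (not_lt.2 h), if_pos h, if_pos (h.trans ht.1)]
        field_simp
        ring
      · rw [if_pos h, if_neg (not_le.2 h)]
        split_ifs
        · field_simp
          ring
        · ring
    have e4 : P.eval t = γ / (((m+1 : ℕ) : ℝ) * (Nat.factorial m : ℝ)) * t ^ (m+1)
        + (1/(n:ℝ)) * ∑ i : Fin n,
        (if x i ≤ τ 0 then (1 - γ / ghat (x i)) / (Nat.factorial m : ℝ) else 0) *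
          (t - x i) ^ m := by
      rw [hP]
      simp only [Polynomial.eval_add, Polynomial.eval_mul, Polynomial.eval_C, Polynomial.eval_pow,
        Polynomial.eval_X, Polynomial.eval_sub, Polynomial.eval_finsetSum]
    rw [hS, hW, hf', hΔ', hY']
    simp only
    rw [e4]
    have e5 : γ / (((m+1 : ℕ) : ℝ) * (Nat.factorial m : ℝ)) * t ^ (m+1)
        = γ * (t ^ (m+1) / ((m+1 : ℕ) : ℝ) / (Nat.factorial m : ℝ)) := by
      field_simp
    rw [e5]
    linear_combination (1/(n:ℝ)) * e3 - e2
  -- the error spline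
  have hsplY : IsSpl N τ (N+2) (N+1) HY := ⟨hHY.1, hHY.2.1⟩
  have hsplf : IsSpl N τ (N+2) (N+1) Hf := ⟨hHf.1, hHf.2.1⟩
  have hsplΔ : IsSpl N τ (N+2) (N+1) HΔ := ⟨hHΔ.1, hHΔ.2.1⟩
  have hE := (hsplY.add ((hsplf.add hsplΔ).smul γ)).add (hSspl.smul (-1))
  have hmem : ∀ i, i ≤ N → τ i ∈ Icc (τ 0) (τ N) := fun i hi =>
    ⟨knots_mono hτ (Nat.zero_le i) hi, knots_mono hτ hi le_rfl⟩
  have hzero := spline_unique hN1 hτ hE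
    (fun i hi => by
      have h := hident _ (hmem i hi)
      rw [hWτ i hi] at h
      rw [(hHY.2.2 i (by omega)).1, (hHf.2.2 i (by omega)).1, (hHΔ.2.2 i (by omega)).1]
      linear_combination h)
    (fun i hi => by
      have hi0 := hpos _ (hmem i hi)
      have hdw : ∀ {H : ℝ → ℝ}, IsSpl N τ (N+2) (N+1) H →
          HasDerivWithinAt H (derivWithin H (Icc (τ 0) (τ N)) (τ i)) (Icc (τ 0) (τ N)) (τ i) :=
        fun hH => (hH.1.differentiableOn (by simp) _ (hmem i hi)).hasDerivWithinAt
      have dY := (hYd _ hi0).differentiableWithinAt (s := Icc (τ 0) (τ N)) |>.hasDerivWithinAt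
      have df := (hfd _ hi0).differentiableWithinAt (s := Icc (τ 0) (τ N)) |>.hasDerivWithinAt
      have dΔ := (hΔd _ hi0).differentiableWithinAt (s := Icc (τ 0) (τ N)) |>.hasDerivWithinAt
      have dL := dY.fun_add ((df.fun_add dΔ).const_mul γ)
      have dR := (hdw hSspl).fun_sub ((hWder i hi).hasDerivWithinAt.const_mul γ)
      have dR' := dR.congr hident (hident _ (hmem i hi))
      have heq := (hU _ (hmem i hi)).eq_deriv _ dL dR'
      have dE := ((hdw hsplY).fun_add (((hdw hsplf).fun_add (hdw hsplΔ)).const_mul γ)).fun_add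
        ((hdw hSspl).const_mul (-1))
      rw [dE.derivWithin (hU _ (hmem i hi)), (hHY.2.2 i (by omega)).2,
        (hHf.2.2 i (by omega)).2, (hHΔ.2.2 i (by omega)).2]
      linear_combination heq)
  intro t ht
  have h1 := hzero t ht
  have h2 := hident t ht
  have h3 := mul_nonneg hγ.le (hWnn t (hpos t ht))
  linarith
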